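/- arXiv:2302.07461 — 2 statements merged into one kernel-verified Lean document; each statement's English description precedes it below -/
import Mathlib

section
/- Let f : ℕ → ℂ be a multiplicative function satisfying f(a³ + b³) = f(a³) + f(b³) for all positive integers a, b, and let p ≥ 5 be a prime. Assume that f(q^r) = q^r for every prime q < p and every integer r ≥ 1 with (q, r) ≠ (3, 1). Then f(p³) = p³; moreover, if p ≡ 2 (mod 3) then f((p² − p + 1)/3) = (p² − p + 1)/3, and if p ≡ 1 (mod 3) then f(p² − p + 1) = p² − p + 1. -/
/-!
Write `M_b = p² - p b + b²`, so that `p³ + b³ = (p + b) M_b`, and note `M_b = M_{p-b}`.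
Choose `0 < b < p` with `3 ∣ p + b`, say `p + b = 3 s` and `p + (p - b) = 3 t`. Then `M_b = 3 K`
with `K` coprime to both `9 s` and `9 t`, while `s, t < p`; hence `f (9 s) = 9 s` and
`f (9 t) = 9 t` by the hypothesis on prime powers, the exceptional value `f 3` being avoided because
`9` divides both numbers. Multiplicativity and additivity on cubes give two linear equations
`9 s f(K) = f(p³) + b³` and `9 t f(K) = f(p³) + (p - b)³`, whose unique solution (when `p ≠ 2 b`) is
`f(K) = K`, `f(p³) = p³` (`cube_and_cofactor`).

For `p ≡ 2 (mod 3)` the choice `b = 1` gives `K = (p² - p + 1) / 3`, so both claims follow at once.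
For `p ≡ 1 (mod 3)` the choice `b = 2` gives `f(p³) = p³`, and then
`p³ + 1 = (p + 1)(p² - p + 1)`, with coprime factors and `p + 1` composed of primes below `p`, gives
the value at `p² - p + 1`.
-/

/-- `f` is the identity on integers all of whose prime factors are below `p` and which are not
exactly divisible by `3`. -/
lemma eq_self_of_smooth (f : ℕ → ℂ) (hf1 : f 1 = 1)
    (hmul : ∀ m n : ℕ, 0 < m → 0 < n → Nat.Coprime m n → f (m * n) = f m * f n)
    (p : ℕ)
    (hind : ∀ q r : ℕ, q.Prime → q < p → 1 ≤ r → ¬(q = 3 ∧ r = 1) → f (q ^ r) = q ^ r)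
    (n : ℕ) (hn : 0 < n) (hs : ∀ q : ℕ, q.Prime → q ∣ n → q < p) (h3 : 3 ∣ n → 9 ∣ n) :
    f n = n := by
  induction n using Nat.recOnPrimeCoprime with
  | zero => omega
  | prime_pow q r hq =>
    rcases Nat.eq_zero_or_pos r with rfl | hr
    · simp [hf1]
    · rw [hind q r hq (hs q hq (dvd_pow_self q hr.ne')) hr]
      · push_cast; rfl
      · rintro ⟨rfl, rfl⟩
        norm_num at h3
  | coprime a b ha hb hab iha ihb =>
    have aux : ∀ x y : ℕ, Nat.Coprime x y → (3 ∣ x * y → 9 ∣ x * y) → 3 ∣ x → 9 ∣ x := by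
      intro x y hxy h hx
      have h3y : Nat.Coprime 3 y := Nat.Coprime.coprime_dvd_left hx hxy
      exact (Nat.Coprime.pow_left 2 h3y).dvd_of_dvd_mul_right (h (hx.mul_right y))
    rw [hmul a b (by omega) (by omega) hab,
      iha (by omega) (fun q hq h => hs q hq (h.mul_right b)) (aux a b hab h3),
      ihb (by omega) (fun q hq h => hs q hq (h.mul_left a))
        (aux b a hab.symm (by rwa [mul_comm b a]))]
    push_cast; rfl

/-- If `p + b = 3 s` and `K = 3 s² - p b = (p² - p b + b²) / 3`, then `p³ + b³ = 9 s K` is a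
factorization into coprime factors, and so gives a linear relation between `f (p³)` and `f K`. -/
lemma linear_relation (f : ℕ → ℂ) (hf1 : f 1 = 1)
    (hmul : ∀ m n : ℕ, 0 < m → 0 < n → Nat.Coprime m n → f (m * n) = f m * f n)
    (hadd : ∀ a b : ℕ, 0 < a → 0 < b → f (a ^ 3 + b ^ 3) = f (a ^ 3) + f (b ^ 3))
    (p : ℕ) (hp : p.Prime) (hp5 : 5 ≤ p)
    (hind : ∀ q r : ℕ, q.Prime → q < p → 1 ≤ r → ¬(q = 3 ∧ r = 1) → f (q ^ r) = q ^ r)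
    (b s K : ℕ) (hb : 0 < b) (hbp : b < p) (hs : p + b = 3 * s) (hK : K + p * b = 3 * s ^ 2)
    (hK0 : 0 < K) :
    9 * (s : ℂ) * f K = f (p ^ 3) + (b : ℂ) ^ 3 := by
  have hcop : Nat.Coprime (9 * s) K := by
    refine Nat.Coprime.symm (Nat.coprime_of_dvd fun q hq hqK hq9 => ?_)
    have h1 : q ∣ 3 * s := by
      rcases (Nat.Prime.dvd_mul hq).1 hq9 with h | h
      · exact (hq.dvd_of_dvd_pow (show q ∣ 3 ^ 2 by simpa using h)).mul_right s
      · exact h.mul_left 3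
    have h2 : q ∣ p * b := by
      refine (Nat.dvd_add_right hqK).1 ?_
      rw [hK, pow_two, ← mul_assoc]
      exact h1.mul_right s
    rw [← hs] at h1
    have h3 : q ∣ p ∧ q ∣ b := by
      rcases (Nat.Prime.dvd_mul hq).1 h2 with h | h
      · exact ⟨h, (Nat.dvd_add_right h).1 h1⟩
      · exact ⟨(Nat.dvd_add_left h).1 h1, h⟩
    have h4 : q = p := (Nat.prime_dvd_prime_iff_eq hq hp).1 h3.1
    have := Nat.le_of_dvd hb h3.2
    omega
  have hfac : p ^ 3 + b ^ 3 = 9 * s * K := by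
    zify at hs hK ⊢
    have hK' : (K : ℤ) = 3 * s ^ 2 - p * b := by linarith
    have hp' : (p : ℤ) = 3 * s - b := by linarith
    rw [hK', hp']; ring
  have h9 : f (9 * s) = ((9 * s : ℕ) : ℂ) := by
    refine eq_self_of_smooth f hf1 hmul p hind _ (by omega) (fun q hq h => ?_)
      (fun _ => Dvd.intro s rfl)
    rcases (Nat.Prime.dvd_mul hq).1 h with h | h
    · have := Nat.le_of_dvd (by norm_num)
        (hq.dvd_of_dvd_pow (show q ∣ 3 ^ 2 by simpa using h))
      omega
    · have := Nat.le_of_dvd (by omega) h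
      omega
  have hb3 : f (b ^ 3) = ((b ^ 3 : ℕ) : ℂ) := by
    refine eq_self_of_smooth f hf1 hmul p hind _ (by positivity) (fun q hq h => ?_) (fun h => ?_)
    · have := Nat.le_of_dvd hb (hq.dvd_of_dvd_pow h)
      omega
    · have h3 : 3 ∣ b := Nat.prime_three.dvd_of_dvd_pow h
      exact (pow_dvd_pow_of_dvd h3 2).trans (pow_dvd_pow b (by norm_num))
  have := hadd p b (by omega) hb
  rw [hfac, hmul _ _ (by omega) hK0 hcop, h9, hb3] at this
  push_cast at this
  exact this

/-- The relations for `b` and `c = p - b` share the cofactor `K`, and determine both unknowns. -/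
lemma cube_and_cofactor (f : ℕ → ℂ) (hf1 : f 1 = 1)
    (hmul : ∀ m n : ℕ, 0 < m → 0 < n → Nat.Coprime m n → f (m * n) = f m * f n)
    (hadd : ∀ a b : ℕ, 0 < a → 0 < b → f (a ^ 3 + b ^ 3) = f (a ^ 3) + f (b ^ 3))
    (p : ℕ) (hp : p.Prime) (hp5 : 5 ≤ p)
    (hind : ∀ q r : ℕ, q.Prime → q < p → 1 ≤ r → ¬(q = 3 ∧ r = 1) → f (q ^ r) = q ^ r)
    (b c s t K : ℕ) (hb : 0 < b) (hc : 0 < c) (hbc : b ≠ c) (hpbc : p = b + c)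
    (hs : p + b = 3 * s) (ht : p + c = 3 * t) (hK : K + p * b = 3 * s ^ 2) (hK0 : 0 < K) :
    f (p ^ 3) = p ^ 3 ∧ f K = K := by
  have hK2 : K + p * c = 3 * t ^ 2 := by
    zify at *
    have hb' : (b : ℤ) = 2 * s - t := by linarith
    have hc' : (c : ℤ) = 2 * t - s := by linarith
    have hp' : (p : ℤ) = s + t := by linarith
    rw [hp', hb'] at hK
    rw [hp', hc']
    linear_combination hK
  have e1 := linear_relation f hf1 hmul hadd p hp hp5 hind b s K hb (by omega) hs hK hK0
  have e2 := linear_relation f hf1 hmul hadd p hp hp5 hind c t K hc (by omega) ht hK2 hK0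
  have hst : (t : ℂ) - s ≠ 0 := by
    rw [sub_ne_zero]
    intro h
    have : t = s := by exact_mod_cast h
    omega
  have hb' : (b : ℂ) = 2 * s - t := by
    have : b + t = 2 * s := by omega
    rw [eq_sub_iff_add_eq]; exact_mod_cast this
  have hc' : (c : ℂ) = 2 * t - s := by
    have : c + s = 2 * t := by omega
    rw [eq_sub_iff_add_eq]; exact_mod_cast this
  have hp' : (p : ℂ) = s + t := by
    have : p = s + t := by omega
    exact_mod_cast this
  have hK' : (K : ℂ) = 3 * s ^ 2 - p * b := by
    rw [eq_sub_iff_add_eq]; exact_mod_cast hK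
  rw [hp', hb'] at hK'
  rw [hb'] at e1
  rw [hc'] at e2
  have hfK : f K = K := by
    apply mul_left_cancel₀ hst
    rw [hK']
    linear_combination (e2 - e1) / 9
  refine ⟨?_, hfK⟩
  rw [hfK, hK'] at e1
  rw [hp']
  linear_combination -e1

theorem cubes_two_induction_pcubed (f : ℕ → ℂ)
    (hf1 : f 1 = 1)
    (hmul : ∀ m n : ℕ, 0 < m → 0 < n → Nat.Coprime m n → f (m * n) = f m * f n)
    (hadd : ∀ a b : ℕ, 0 < a → 0 < b →
      f (a ^ 3 + b ^ 3) = f (a ^ 3) + f (b ^ 3))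
    (p : ℕ) (hp : p.Prime) (hp5 : 5 ≤ p)
    (hind : ∀ q r : ℕ, q.Prime → q < p → 1 ≤ r → ¬(q = 3 ∧ r = 1) →
      f (q ^ r) = q ^ r) :
    f (p ^ 3) = p ^ 3 ∧
    (p % 3 = 2 → f ((p ^ 2 - p + 1) / 3) = ((p ^ 2 - p + 1) / 3 : ℕ)) ∧
    (p % 3 = 1 → f (p ^ 2 - p + 1) = ((p ^ 2 - p + 1 : ℕ) : ℂ)) := by
  have h0 : p % 3 ≠ 0 := fun h => by
    have := (Nat.prime_dvd_prime_iff_eq Nat.prime_three hp).1 (Nat.dvd_of_mod_eq_zero h)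
    omega
  have hle : p ≤ p ^ 2 := by nlinarith
  obtain h | h : p % 3 = 1 ∨ p % 3 = 2 := by omega
  · obtain ⟨m, rfl⟩ : ∃ m, p = 3 * m + 1 := ⟨p / 3, by omega⟩
    have hy := (cube_and_cofactor f hf1 hmul hadd _ hp hp5 hind 2 (3 * m - 1) (m + 1) (2 * m)
      (3 * m ^ 2 + 1) (by omega) (by omega) (by omega) (by omega) (by omega) (by omega)
      (by ring) (by omega)).1
    refine ⟨hy, fun h' => by omega, fun _ => ?_⟩
    set p := 3 * m + 1 with hpm
    obtain ⟨N, hN⟩ : ∃ N, N = p ^ 2 - p + 1 := ⟨_, rfl⟩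
    have hN' : N + p = p ^ 2 + 1 := by omega
    rw [← hN]
    have hq_p : ∀ q : ℕ, q.Prime → q ∣ p + 1 → ¬ q ∣ p := fun q hq h1 h2 =>
      hq.one_lt.ne' (Nat.dvd_one.1 ((Nat.dvd_add_right h2).1 h1))
    have hcop : Nat.Coprime (p + 1) N := by
      refine Nat.coprime_of_dvd fun q hq h1 h2 => ?_
      have h3 : q ∣ 3 * p := by
        refine (Nat.dvd_add_right h2).1 ?_
        have : N + 3 * p = (p + 1) * (p + 1) := by nlinarith
        rw [this]
        exact h1.mul_right _
      rcases (Nat.Prime.dvd_mul hq).1 h3 with h3 | h3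
      · rw [(Nat.prime_dvd_prime_iff_eq hq Nat.prime_three).1 h3] at h1
        omega
      · exact hq_p q hq h1 h3
    have hf : f (p + 1) = ((p + 1 : ℕ) : ℂ) := by
      refine eq_self_of_smooth f hf1 hmul p hind _ (by omega) (fun q hq h1 => ?_)
        (fun h3 => by omega)
      have hle := Nat.le_of_dvd (by omega) h1
      have hne : q ≠ p := fun e => hq_p q hq h1 (e ▸ dvd_rfl)
      -- `p + 1` is even and larger than `2`, hence not prime.
      have hne' : q ≠ p + 1 := fun e => by
        have := hp.eq_two_or_odd
        have := hq.eq_two_or_odd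
        omega
      omega
    have hfac : p ^ 3 + 1 ^ 3 = (p + 1) * N := by
      zify at hN' ⊢
      linear_combination (-(p : ℤ) - 1) * hN'
    have e := hadd p 1 (by omega) one_pos
    rw [hfac, hmul _ _ (by omega) (by omega) hcop, hf, one_pow, hf1, hy] at e
    have hne : ((p + 1 : ℕ) : ℂ) ≠ 0 := by exact_mod_cast Nat.succ_ne_zero p
    apply mul_left_cancel₀ hne
    rw [e]
    exact_mod_cast (by simpa using hfac)
  · obtain ⟨m, rfl⟩ : ∃ m, p = 3 * m + 2 := ⟨p / 3, by omega⟩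
    have hN : ((3 * m + 2) ^ 2 - (3 * m + 2) + 1) / 3 = 3 * m ^ 2 + 3 * m + 1 := by
      have : (3 * m + 2) ^ 2 = 3 * (3 * m ^ 2 + 3 * m + 1) + 3 * m + 1 := by ring
      omega
    have hy := cube_and_cofactor f hf1 hmul hadd _ hp hp5 hind 1 (3 * m + 1) (m + 1) (2 * m + 1)
      (3 * m ^ 2 + 3 * m + 1) (by omega) (by omega) (by omega) (by omega) (by omega) (by omega)
      (by ring) (by omega)
    refine ⟨hy.1, fun _ => ?_, fun h' => by omega⟩
    rw [hN]
    exact hy.2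
end

section
/- If f : ℕ → ℂ is a multiplicative function satisfying f(a³ + b³ + c³) = f(a³) + f(b³) + f(c³) for all positive integers a, b, c, then f(2^r) = 2^r and f(3^r) = 3^r for all integers r ≥ 1. -/
/-!
Write `x = f 8`, `y = f 27`. Sums of three cubes that factor into coprime parts in which the same
unknowns recur give polynomial relations between a few values of `f`: the sums 129 and 136 force
`f 64 = x²` and `3 y = 1 - 6 x + 2 x²`, and comparing the sums 55, 155, 62, 66, which are products
of 5 or 2 or 6 with 11 or 31, leaves `(x - 8) (x - 1) (2 x - 1) (4 x - 1) = 0`. The identity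
`9³ = 1³ + 6³ + 8³` rules out `1/2` and `1/4`; the sums 10, 55, 66, 99, 153 and
`6³ = 3³ + 4³ + 5³` rule out `1`. With `x = 8` the values at 4, 5, 9, 27 follow
(`small_values`).

The relations `17 = 1 + 8 + 8` and `29 = 1 + 1 + 27` scaled by `8 ^ k` and `27 ^ k` give
`f (8 ^ k) = 8 ^ k` and `f (27 ^ k) = 27 ^ k` by induction. The remaining residues of the exponent
modulo 3 come from scaling `10 = 1 + 1 + 8` and `36 = 1 + 8 + 27` (powers of 2), and
`3 = 1 + 1 + 1` and `36` (powers of 3).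
-/

/-- The values of `f` on which the inductions over the exponent rest. -/
lemma small_values (f : ℕ → ℂ)
    (hf1 : f 1 = 1)
    (hmul : ∀ m n : ℕ, 0 < m → 0 < n → Nat.Coprime m n → f (m * n) = f m * f n)
    (hadd : ∀ a b c : ℕ, 0 < a → 0 < b → 0 < c →
      f (a ^ 3 + b ^ 3 + c ^ 3) = f (a ^ 3) + f (b ^ 3) + f (c ^ 3)) :
    f 4 = 4 ∧ f 5 = 5 ∧ f 8 = 8 ∧ f 9 = 9 ∧ f 27 = 27 := by
  have m10 := hmul 2 5 (by norm_num) (by norm_num) (by norm_num)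
  have m36 := hmul 4 9 (by norm_num) (by norm_num) (by norm_num)
  have m55 := hmul 5 11 (by norm_num) (by norm_num) (by norm_num)
  have m62 := hmul 2 31 (by norm_num) (by norm_num) (by norm_num)
  have m66 := hmul 6 11 (by norm_num) (by norm_num) (by norm_num)
  have m6 := hmul 2 3 (by norm_num) (by norm_num) (by norm_num)
  have m99 := hmul 9 11 (by norm_num) (by norm_num) (by norm_num)
  have m129 := hmul 3 43 (by norm_num) (by norm_num) (by norm_num)
  have m136 := hmul 8 17 (by norm_num) (by norm_num) (by norm_num)
  have m153 := hmul 9 17 (by norm_num) (by norm_num) (by norm_num)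
  have m155 := hmul 5 31 (by norm_num) (by norm_num) (by norm_num)
  have m216 := hmul 8 27 (by norm_num) (by norm_num) (by norm_num)
  have m783 := hmul 27 29 (by norm_num) (by norm_num) (by norm_num)
  have m1088 := hmul 64 17 (by norm_num) (by norm_num) (by norm_num)
  have a3 := hadd 1 1 1 (by norm_num) (by norm_num) (by norm_num)
  have a10 := hadd 1 1 2 (by norm_num) (by norm_num) (by norm_num)
  have a17 := hadd 1 2 2 (by norm_num) (by norm_num) (by norm_num)
  have a29 := hadd 1 1 3 (by norm_num) (by norm_num) (by norm_num)
  have a36 := hadd 1 2 3 (by norm_num) (by norm_num) (by norm_num)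
  have a43 := hadd 2 2 3 (by norm_num) (by norm_num) (by norm_num)
  have a55 := hadd 1 3 3 (by norm_num) (by norm_num) (by norm_num)
  have a62 := hadd 2 3 3 (by norm_num) (by norm_num) (by norm_num)
  have a66 := hadd 1 1 4 (by norm_num) (by norm_num) (by norm_num)
  have a99 := hadd 2 3 4 (by norm_num) (by norm_num) (by norm_num)
  have a129 := hadd 1 4 4 (by norm_num) (by norm_num) (by norm_num)
  have a136 := hadd 2 4 4 (by norm_num) (by norm_num) (by norm_num)
  have a153 := hadd 1 3 5 (by norm_num) (by norm_num) (by norm_num)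
  have a155 := hadd 3 4 4 (by norm_num) (by norm_num) (by norm_num)
  have a216 := hadd 3 4 5 (by norm_num) (by norm_num) (by norm_num)
  have a729 := hadd 1 6 8 (by norm_num) (by norm_num) (by norm_num)
  have a783 := hadd 3 3 9 (by norm_num) (by norm_num) (by norm_num)
  have a1088 := hadd 4 8 8 (by norm_num) (by norm_num) (by norm_num)
  clear hadd hmul
  norm_num [hf1] at m10 m36 m55 m62 m66 m6 m99 m129 m136 m153 m155 m216 m783 m1088
  norm_num [hf1] at a3 a10 a17 a29 a36 a43 a55 a62 a66 a99 a129 a136 a153 a155 a216 a729 a783 a1088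
  rw [m10] at a10
  rw [a36] at m36
  rw [a55] at m55
  rw [a62] at m62
  rw [a66, m6, a3] at m66
  rw [a99] at m99
  rw [a129, a3, a43] at m129
  rw [a136, a17] at m136
  rw [a153, a17] at m153
  rw [a155] at m155
  rw [m216] at a216
  rw [a783, a29] at m783
  rw [a1088, a17] at m1088
  rw [m216] at a729
  generalize f 8 = x at *
  generalize f 27 = y at *
  generalize f 64 = z at *
  generalize f 125 = w at *
  generalize f 512 = e at *
  generalize f 729 = n at *
  generalize f 2 = q at *
  generalize f 4 = s at *
  generalize f 5 = p at *
  generalize f 9 = t at *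
  generalize f 11 = A at *
  generalize f 31 = B at *
  have hz : z = x ^ 2 := by linear_combination m136 / 2
  have hy : y = (1 + 2 * x ^ 2 - 6 * x) / 3 := by
    linear_combination -m129 / 3 + 2 / 3 * hz
  have hw : w = x * y - y - z := by linear_combination -a216
  have he : e = x * z := by linear_combination m1088 / 2
  have hn : n = y ^ 2 := by linear_combination m783
  -- Both sides equal `3 * f 2 * f 5 * f 11 * f 31`.
  have key : 3 * (1 + 2 * y) * (x + 2 * y) = (2 + z) * (y + 2 * z) := by
    have h66 : 2 + z = q * 3 * A := by linear_combination m66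
    have h55 : 1 + 2 * y = p * A := by linear_combination m55
    have h62 : x + 2 * y = q * B := by linear_combination m62
    have h155 : y + 2 * z = p * B := by linear_combination m155
    rw [h66, h55, h62, h155]; ring
  subst hn he hw hz hy
  have hx : (x - 8) * ((x - 1) * ((2 * x - 1) * (4 * x - 1))) = 0 := by
    linear_combination 3 * key
  rcases mul_eq_zero.mp hx with h | h
  · obtain rfl : x = 8 := by linear_combination h
    norm_num at *
    have ht : t = 9 := by linear_combination -m153 / 17
    subst ht
    have hA : A = 11 := by linear_combination -m99 / 9
    subst hA
    exact ⟨by linear_combination -m36 / 9, by linear_combination -m55 / 11, rfl⟩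
  exfalso
  rcases mul_eq_zero.mp h with h | h
  · obtain rfl : x = 1 := by linear_combination h
    norm_num at *
    have ht : t = -1 / 3 := by linear_combination -m153 / 3
    subst ht
    have hA : A = -3 := by linear_combination 3 * m99
    subst hA
    have hp : p = 1 / 3 := by linear_combination m55 / 3
    have hq : q = -1 / 3 := by linear_combination m66 / 9
    subst hp hq
    norm_num at a10
  rcases mul_eq_zero.mp h with h | h
  · obtain rfl : x = 1 / 2 := by linear_combination h / 2
    norm_num at a729
  · obtain rfl : x = 1 / 4 := by linear_combination h / 4
    norm_num at a729

theorem cubes_three_prime_powers (f : ℕ → ℂ)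
    (hf1 : f 1 = 1)
    (hmul : ∀ m n : ℕ, 0 < m → 0 < n → Nat.Coprime m n → f (m * n) = f m * f n)
    (hadd : ∀ a b c : ℕ, 0 < a → 0 < b → 0 < c →
      f (a ^ 3 + b ^ 3 + c ^ 3) = f (a ^ 3) + f (b ^ 3) + f (c ^ 3)) :
    ∀ r : ℕ, 1 ≤ r → f (2 ^ r) = 2 ^ r ∧ f (3 ^ r) = 3 ^ r := by
  obtain ⟨h4, h5, h8, h9, h27⟩ := small_values f hf1 hmul hadd
  have h17 : f 17 = 17 := by
    have := hadd 1 2 2 (by norm_num) (by norm_num) (by norm_num)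
    norm_num [hf1, h8] at this
    exact this
  have h29 : f 29 = 29 := by
    have := hadd 1 1 3 (by norm_num) (by norm_num) (by norm_num)
    norm_num [hf1, h27] at this
    exact this
  have mul2 (k m : ℕ) (hm : 0 < m) (hc : Nat.Coprime 2 m) :
      f (2 ^ k * m) = f (2 ^ k) * f m :=
    hmul _ _ (by positivity) hm (hc.pow_left k)
  have mul3 (k m : ℕ) (hm : 0 < m) (hc : Nat.Coprime 3 m) :
      f (3 ^ k * m) = f (3 ^ k) * f m :=
    hmul _ _ (by positivity) hm (hc.pow_left k)
  have two (k : ℕ) : f (2 ^ (3 * k)) = 2 ^ (3 * k) := by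
    induction k with
    | zero => simpa using hf1
    | succ k ih =>
      have a := hadd (2 ^ k) (2 ^ (k + 1)) (2 ^ (k + 1))
        (by positivity) (by positivity) (by positivity)
      have e : (2 ^ k) ^ 3 + (2 ^ (k + 1)) ^ 3 + (2 ^ (k + 1)) ^ 3 = 2 ^ (3 * k) * 17 := by ring
      rw [e, mul2 _ _ (by norm_num) (by norm_num), h17, ← pow_mul, ← pow_mul, mul_comm k,
        mul_comm (k + 1), ih] at a
      linear_combination -a / 2
  have three (k : ℕ) : f (3 ^ (3 * k)) = 3 ^ (3 * k) := by
    induction k with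
    | zero => simpa using hf1
    | succ k ih =>
      have a := hadd (3 ^ k) (3 ^ k) (3 ^ (k + 1))
        (by positivity) (by positivity) (by positivity)
      have e : (3 ^ k) ^ 3 + (3 ^ k) ^ 3 + (3 ^ (k + 1)) ^ 3 = 3 ^ (3 * k) * 29 := by ring
      rw [e, mul3 _ _ (by norm_num) (by norm_num), h29, ← pow_mul, ← pow_mul, mul_comm k,
        mul_comm (k + 1), ih] at a
      linear_combination -a
  intro r _
  obtain ⟨k, rfl | rfl | rfl⟩ : ∃ k, r = 3 * k ∨ r = 3 * k + 1 ∨ r = 3 * k + 2 :=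
    ⟨r / 3, by omega⟩
  · exact ⟨two k, three k⟩
  · constructor
    · have a := hadd (2 ^ k) (2 ^ k) (2 ^ (k + 1))
        (by positivity) (by positivity) (by positivity)
      have e : (2 ^ k) ^ 3 + (2 ^ k) ^ 3 + (2 ^ (k + 1)) ^ 3 = 2 ^ (3 * k + 1) * 5 := by ring
      rw [e, mul2 _ _ (by norm_num) (by norm_num), h5, ← pow_mul, ← pow_mul, mul_comm k,
        mul_comm (k + 1), two, two] at a
      linear_combination a / 5
    · have a := hadd (3 ^ k) (3 ^ k) (3 ^ k) (by positivity) (by positivity) (by positivity)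
      have e : (3 ^ k) ^ 3 + (3 ^ k) ^ 3 + (3 ^ k) ^ 3 = 3 ^ (3 * k + 1) := by ring
      rw [e, ← pow_mul, mul_comm k, three] at a
      linear_combination a
  · constructor
    · have a := hadd (2 ^ k) (2 ^ (k + 1)) (2 ^ k * 3)
        (by positivity) (by positivity) (by positivity)
      have e : (2 ^ k) ^ 3 + (2 ^ (k + 1)) ^ 3 + (2 ^ k * 3) ^ 3 = 2 ^ (3 * k + 2) * 9 := by ring
      have e' : (2 ^ k * 3) ^ 3 = 2 ^ (3 * k) * 27 := by ring
      rw [e, e', mul2 _ _ (by norm_num) (by norm_num), mul2 _ _ (by norm_num) (by norm_num),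
        h9, h27, ← pow_mul, ← pow_mul, mul_comm k, mul_comm (k + 1), two, two] at a
      linear_combination a / 9
    · have a := hadd (3 ^ k) (3 ^ k * 2) (3 ^ (k + 1))
        (by positivity) (by positivity) (by positivity)
      have e : (3 ^ k) ^ 3 + (3 ^ k * 2) ^ 3 + (3 ^ (k + 1)) ^ 3 = 3 ^ (3 * k + 2) * 4 := by ring
      have e' : (3 ^ k * 2) ^ 3 = 3 ^ (3 * k) * 8 := by ring
      rw [e, e', mul3 _ _ (by norm_num) (by norm_num), mul3 _ _ (by norm_num) (by norm_num),
        h4, h8, ← pow_mul, ← pow_mul, mul_comm k, mul_comm (k + 1), three, three] at a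
      linear_combination a / 4
end
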